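/- Let μ be a Borel probability measure on Ω absolutely continuous with respect to d-dimensional Lebesgue measure, and let ν be a Borel probability measure on Ω with spt(ν) ⊂ M, where M is a C¹ submanifold of ℝ^d of dimension m ≤ d − 2. Let u0 be a Kantorovich potential and T0 an optimal transport map for W1(μ,ν), and let A = {y ∈ spt(ν) : α(y) > 0 and β(y) > 0}. Then ν(A) = 0. -/

import Mathlib

open MeasureTheory Set

noncomputable section

/-- The Wasserstein 1 distance between two Borel probability measures, defined as the
infimum of the transport cost over all couplings. -/
def W1 {d : ℕ} (μ ν : Measure (EuclideanSpace ℝ (Fin d))) : ℝ :=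
  sInf {c | ∃ γ : Measure (EuclideanSpace ℝ (Fin d) × EuclideanSpace ℝ (Fin d)),
    IsProbabilityMeasure γ ∧ γ.map Prod.fst = μ ∧ γ.map Prod.snd = ν ∧
    c = ∫ p, ‖p.1 - p.2‖ ∂γ}

/-- `u0` is a Kantorovich potential for `W1(μ, ν)`: it is 1-Lipschitz on Ω and achieves
the supremum in the dual problem. -/
def IsKantorovichPotential {d : ℕ} (Ω : Set (EuclideanSpace ℝ (Fin d)))
    (μ ν : Measure (EuclideanSpace ℝ (Fin d))) (u0 : EuclideanSpace ℝ (Fin d) → ℝ) : Prop :=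
  LipschitzOnWith 1 u0 Ω ∧
  ∀ u : EuclideanSpace ℝ (Fin d) → ℝ, LipschitzOnWith 1 u Ω →
    ∫ x, u x ∂μ - ∫ x, u x ∂ν ≤ ∫ x, u0 x ∂μ - ∫ x, u0 x ∂ν

/-- `T` is an optimal transport map for `W1(μ, ν)`: a Borel map from Ω to Ω pushing μ
forward to ν whose transport cost equals `W1 μ ν`. -/
def IsOptimalMap {d : ℕ} (Ω : Set (EuclideanSpace ℝ (Fin d)))
    (μ ν : Measure (EuclideanSpace ℝ (Fin d)))
    (T : EuclideanSpace ℝ (Fin d) → EuclideanSpace ℝ (Fin d)) : Prop :=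
  Measurable T ∧ MapsTo T Ω Ω ∧ μ.map T = ν ∧ ∫ x, ‖x - T x‖ ∂μ = W1 μ ν

/-- `rayLow Ω u0 x` (denoted α in the paper): the distance from `x` to the lower
endpoint of a transport ray through `x`. -/
def rayLow {d : ℕ} (Ω : Set (EuclideanSpace ℝ (Fin d)))
    (u0 : EuclideanSpace ℝ (Fin d) → ℝ) (x : EuclideanSpace ℝ (Fin d)) : ℝ :=
  sSup {r | ∃ z ∈ Ω, u0 x - u0 z = ‖x - z‖ ∧ r = ‖x - z‖}

/-- `rayHigh Ω u0 x` (denoted β in the paper): the distance from `x` to the upper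
endpoint of a transport ray through `x`. -/
def rayHigh {d : ℕ} (Ω : Set (EuclideanSpace ℝ (Fin d)))
    (u0 : EuclideanSpace ℝ (Fin d) → ℝ) (x : EuclideanSpace ℝ (Fin d)) : ℝ :=
  sSup {r | ∃ z ∈ Ω, u0 z - u0 x = ‖x - z‖ ∧ r = ‖x - z‖}

/-- The support of a Borel measure: the set of points all of whose open neighbourhoods
have positive measure (equivalently, the smallest closed set of full measure). -/
def mSupport {X : Type*} [TopologicalSpace X] [MeasurableSpace X] (μ : Measure X) : Set X :=
  {x | ∀ U : Set X, IsOpen U → x ∈ U → 0 < μ U}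

/-- `M` is a C¹ submanifold of `ℝ^d` of dimension `m`: it is covered by countably many
charts `(U i, φ i)` where `φ i` is a C¹ map, injective on `U i`, with inverse Lipschitz
on the image `φ i '' U i`. -/
def IsC1Submanifold {d : ℕ} (m : ℕ) (M : Set (EuclideanSpace ℝ (Fin d))) : Prop :=
  ∃ (U : ℕ → Set (EuclideanSpace ℝ (Fin d)))
    (φ : ℕ → EuclideanSpace ℝ (Fin d) → EuclideanSpace ℝ (Fin m)),
    M ⊆ ⋃ i, U i ∧
    ∀ i, U i ⊆ M ∧ ContDiffOn ℝ 1 (φ i) (U i) ∧ InjOn (φ i) (U i) ∧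
      ∃ (K : NNReal) (ψ : EuclideanSpace ℝ (Fin m) → EuclideanSpace ℝ (Fin d)),
        LipschitzOnWith K ψ (φ i '' U i) ∧ ∀ x ∈ U i, ψ (φ i x) = x

/-!
By Kantorovich duality, the slack `‖x - T0 x‖ - (u0 x - u0 (T0 x))`, which is nonnegative, has
integral zero against `μ`, so `T0` moves `μ`-almost every `x` along a ray on which `u0` has slope
one. At a point lying at least `ε` inside such a ray, the direction of the ray is unique, and it
depends on the point in a Lipschitz way with constant `1 / ε`. Hence the rays through such points
of `M` sweep out a countable union of Lipschitz images of `(m + 1)`-dimensional sets. As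
`m + 1 < d`, this union is Lebesgue null, thus `μ`-null, and it contains almost every `x` for which
`T0 x` is one of these points.
-/

/-! ### Kantorovich duality -/

lemma integrable_of_compactSpace {X : Type*} [TopologicalSpace X] [CompactSpace X]
    [MeasurableSpace X] [BorelSpace X] (μ : Measure X) [IsFiniteMeasure μ] {f : X → ℝ}
    (hf : Continuous f) : Integrable f μ :=
  hf.integrable_of_hasCompactSupport (.of_compactSpace f)

/-- The integral against a finite measure on a compact space, as a linear functional on continuous
functions. -/
def integralLinearMap {X : Type*} [TopologicalSpace X] [CompactSpace X] [MeasurableSpace X]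
    [BorelSpace X] (μ : Measure X) [IsFiniteMeasure μ] : C(X, ℝ) →ₗ[ℝ] ℝ where
  toFun f := ∫ x, f x ∂μ
  map_add' f g := integral_add (integrable_of_compactSpace μ f.continuous)
    (integrable_of_compactSpace μ g.continuous)
  map_smul' r f := integral_smul r f

lemma exists_nonneg_linearMap_comp_eq {A E : Type*} [AddCommGroup A] [Module ℝ A]
    [AddCommGroup E] [Module ℝ E] (F : A →ₗ[ℝ] E) (l : A →ₗ[ℝ] ℝ) (s : PointedCone ℝ E)
    (hpos : ∀ a, F a ∈ s → 0 ≤ l a) (hdense : ∀ y, ∃ a, F a + y ∈ s) :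
    ∃ g : E →ₗ[ℝ] ℝ, (∀ a, g (F a) = l a) ∧ ∀ x ∈ s, 0 ≤ g x := by
  have hker : LinearMap.ker F ≤ LinearMap.ker l := by
    intro a ha
    rw [LinearMap.mem_ker] at ha ⊢
    have h₁ := hpos a (ha ▸ s.zero_mem)
    have h₂ := hpos (-a) (by rw [map_neg, ha, neg_zero]; exact s.zero_mem)
    rw [map_neg] at h₂
    linarith
  obtain ⟨f, hf⟩ : l ∈ LinearMap.range F.dualMap := by
    rw [LinearMap.range_dualMap_eq_dualAnnihilator_ker, Submodule.mem_dualAnnihilator]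
    exact hker
  have hfF (a : A) : f (F a) = l a := LinearMap.congr_fun hf a
  obtain ⟨g, hgf, hg⟩ := riesz_extension s (f.toPMap (LinearMap.range F))
    (by rintro ⟨_, a, rfl⟩ ha; exact (hpos a ha).trans_eq (hfF a).symm)
    (fun y ↦ let ⟨a, ha⟩ := hdense y; ⟨⟨F a, a, rfl⟩, ha⟩)
  exact ⟨g, fun a ↦ (hgf ⟨F a, a, rfl⟩).trans (hfF a), hg⟩

open scoped CompactlySupported in
lemma exists_measure_integral_eq_of_nonneg {Y : Type*} [TopologicalSpace Y] [T2Space Y]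
    [CompactSpace Y] [MeasurableSpace Y] [BorelSpace Y] (g : C(Y, ℝ) →ₗ[ℝ] ℝ)
    (hg : ∀ f : C(Y, ℝ), 0 ≤ f → 0 ≤ g f) :
    ∃ γ : Measure Y, IsFiniteMeasure γ ∧ ∀ f : C(Y, ℝ), ∫ y, f y ∂γ = g f := by
  let Λ : C_c(Y, ℝ) →ₚ[ℝ] ℝ := PositiveLinearMap.mk₀
    { toFun f := g f.toContinuousMap
      map_add' f₁ f₂ := map_add g f₁.toContinuousMap f₂.toContinuousMap
      map_smul' r f := map_smul g r f.toContinuousMap }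
    fun f hf ↦ hg f.toContinuousMap hf
  exact ⟨RealRMK.rieszMeasure Λ, inferInstance, fun f ↦
    RealRMK.integral_rieszMeasure Λ (CompactlySupportedContinuousMap.continuousMapEquiv f)⟩

/-- `γ` is a coupling (transport plan) of `μ` and `ν`: its marginals are `μ` and `ν`. -/
structure IsCoupling {X Y : Type*} [MeasurableSpace X] [MeasurableSpace Y] (γ : Measure (X × Y))
    (μ : Measure X) (ν : Measure Y) : Prop where
  map_fst : γ.map Prod.fst = μ
  map_snd : γ.map Prod.snd = ν

namespace IsCoupling

variable {X Y X' Y' : Type*} [MeasurableSpace X] [MeasurableSpace Y] [MeasurableSpace X']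
  [MeasurableSpace Y'] {γ : Measure (X × Y)} {μ : Measure X} {ν : Measure Y}

lemma isProbabilityMeasure [IsProbabilityMeasure μ] (h : IsCoupling γ μ ν) :
    IsProbabilityMeasure γ := by
  have : IsProbabilityMeasure (γ.map Prod.fst) := h.map_fst ▸ inferInstance
  exact Measure.isProbabilityMeasure_of_map Prod.fst

lemma map_prodMap (h : IsCoupling γ μ ν) {f : X → X'} {g : Y → Y'} (hf : Measurable f)
    (hg : Measurable g) : IsCoupling (γ.map (Prod.map f g)) (μ.map f) (ν.map g) where
  map_fst := by
    rw [Measure.map_map measurable_fst (hf.prodMap hg), ← h.map_fst,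
      Measure.map_map hf measurable_fst, Prod.map_fst']
  map_snd := by
    rw [Measure.map_map measurable_snd (hf.prodMap hg), ← h.map_snd,
      Measure.map_map hg measurable_snd, Prod.map_snd']

end IsCoupling

lemma integral_add_integral_nonneg {X Y : Type*} [MeasurableSpace X]
    [MeasurableSpace Y] {μ : Measure X} {ν : Measure Y} [IsProbabilityMeasure μ]
    [IsProbabilityMeasure ν] {f : X → ℝ} {g : Y → ℝ} (hf : Integrable f μ) (hg : Integrable g ν)
    (h : ∀ x y, 0 ≤ f x + g y) : 0 ≤ ∫ x, f x ∂μ + ∫ y, g y ∂ν := by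
  have hprod : ∫ p, (f p.1 + g p.2) ∂μ.prod ν = ∫ x, f x ∂μ + ∫ y, g y ∂ν := by
    rw [integral_add (hf.comp_fst ν) (hg.comp_snd μ), integral_fun_fst, integral_fun_snd]
    simp
  exact hprod ▸ integral_nonneg fun p ↦ h p.1 p.2

section Duality

variable {X Y : Type*} [MetricSpace X] [CompactSpace X] [MeasurableSpace X] [BorelSpace X]
  [MetricSpace Y] [CompactSpace Y] [MeasurableSpace Y] [BorelSpace Y]

/-- The continuous functions `(x, y) ↦ φ x + ψ y + t * c (x, y)`, depending linearly on
`(φ, ψ, t)`. -/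
def addAddSMul (c : C(X × Y, ℝ)) : C(X, ℝ) × C(Y, ℝ) × ℝ →ₗ[ℝ] C(X × Y, ℝ) where
  toFun a := a.1.comp .fst + a.2.1.comp .snd + a.2.2 • c
  map_add' a b := by
    simp only [Prod.fst_add, Prod.snd_add, ContinuousMap.add_comp, add_smul]
    abel
  map_smul' r a := by
    simp only [Prod.smul_fst, Prod.smul_snd, ContinuousMap.smul_comp, smul_assoc, smul_add,
      RingHom.id_apply]

variable {μ : Measure X} {ν : Measure Y} [IsProbabilityMeasure μ] [IsProbabilityMeasure ν]
  {c : C(X × Y, ℝ)} {S : ℝ}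

lemma integral_add_integral_add_mul_nonneg
    (hlower : ∀ (φ : C(X, ℝ)) (ψ : C(Y, ℝ)), (∀ x y, φ x + ψ y ≤ c (x, y)) →
      ∫ x, φ x ∂μ + ∫ y, ψ y ∂ν ≤ S)
    (hupper : ∀ (φ : C(X, ℝ)) (ψ : C(Y, ℝ)), (∀ x y, c (x, y) ≤ φ x + ψ y) →
      S ≤ ∫ x, φ x ∂μ + ∫ y, ψ y ∂ν)
    (φ : C(X, ℝ)) (ψ : C(Y, ℝ)) (t : ℝ) (h : ∀ x y, 0 ≤ φ x + ψ y + t * c (x, y)) :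
    0 ≤ ∫ x, φ x ∂μ + ∫ y, ψ y ∂ν + t * S := by
  have hpoint (ht : t ≠ 0) (x : X) (y : Y) : -t⁻¹ * (φ x + ψ y + t * c (x, y)) =
      (-t⁻¹ • φ) x + (-t⁻¹ • ψ) y - c (x, y) := by
    simp only [ContinuousMap.smul_apply, smul_eq_mul]
    field_simp
    ring
  have hintegral (ht : t ≠ 0) : ∫ x, φ x ∂μ + ∫ y, ψ y ∂ν + t * S =
      -t * (∫ x, (-t⁻¹ • φ) x ∂μ + ∫ y, (-t⁻¹ • ψ) y ∂ν - S) := by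
    simp only [ContinuousMap.smul_apply, smul_eq_mul, integral_const_mul]
    field_simp
    ring
  rcases lt_trichotomy t 0 with ht | rfl | ht
  · rw [hintegral ht.ne]
    refine mul_nonneg (neg_pos.2 ht).le (sub_nonneg.2 (hupper _ _ fun x y ↦ ?_))
    rw [← sub_nonneg, ← hpoint ht.ne]
    exact mul_nonneg (neg_pos.2 (inv_lt_zero.2 ht)).le (h x y)
  · simpa using integral_add_integral_nonneg (integrable_of_compactSpace μ φ.continuous)
      (integrable_of_compactSpace ν ψ.continuous) (by simpa using h)
  · rw [hintegral ht.ne']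
    refine mul_nonneg_of_nonpos_of_nonpos (neg_neg_of_pos ht).le
      (sub_nonpos.2 (hlower _ _ fun x y ↦ ?_))
    rw [← sub_nonpos, ← hpoint ht.ne']
    exact mul_nonpos_of_nonpos_of_nonneg (neg_neg_of_pos (inv_pos.2 ht)).le (h x y)

/- The hypotheses say exactly that `φ ⊕ ψ + t c ↦ ∫ φ ∂μ + ∫ ψ ∂ν + t S` is well defined and
positive; the coupling represents a positive extension of it to all continuous functions. -/
lemma exists_isCoupling_integral_eq
    (hlower : ∀ (φ : C(X, ℝ)) (ψ : C(Y, ℝ)), (∀ x y, φ x + ψ y ≤ c (x, y)) →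
      ∫ x, φ x ∂μ + ∫ y, ψ y ∂ν ≤ S)
    (hupper : ∀ (φ : C(X, ℝ)) (ψ : C(Y, ℝ)), (∀ x y, c (x, y) ≤ φ x + ψ y) →
      S ≤ ∫ x, φ x ∂μ + ∫ y, ψ y ∂ν) :
    ∃ γ : Measure (X × Y), IsCoupling γ μ ν ∧ ∫ p, c p ∂γ = S := by
  let l : C(X, ℝ) × C(Y, ℝ) × ℝ →ₗ[ℝ] ℝ :=
    (integralLinearMap μ).coprod ((integralLinearMap ν).coprod (LinearMap.toSpanSingleton ℝ ℝ S))
  have hl (φ : C(X, ℝ)) (ψ : C(Y, ℝ)) (t : ℝ) :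
      l (φ, ψ, t) = ∫ x, φ x ∂μ + ∫ y, ψ y ∂ν + t * S := (add_assoc _ _ _).symm
  obtain ⟨g, hgl, hg⟩ := exists_nonneg_linearMap_comp_eq (addAddSMul c) l (.positive ℝ _)
    (by
      rintro ⟨φ, ψ, t⟩ h
      rw [hl]
      exact integral_add_integral_add_mul_nonneg hlower hupper φ ψ t fun x y ↦ h (x, y))
    fun f ↦ ⟨(.const X ‖f‖, 0, 0), fun p ↦ by
      simpa [addAddSMul] using neg_le_iff_add_nonneg'.1 (f.neg_norm_le_apply p)⟩
  obtain ⟨γ, _, hγg⟩ := exists_measure_integral_eq_of_nonneg g fun f hf ↦ hg f hf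
  have hγ (φ : C(X, ℝ)) (ψ : C(Y, ℝ)) (t : ℝ) :
      ∫ p, (φ p.1 + ψ p.2 + t * c p) ∂γ = ∫ x, φ x ∂μ + ∫ y, ψ y ∂ν + t * S := by
    rw [← hl, ← hgl, ← hγg]; rfl
  refine ⟨γ, ⟨?_, ?_⟩, by simpa using hγ 0 0 1⟩
  · refine ext_of_forall_integral_eq_of_IsFiniteMeasure fun f ↦ ?_
    rw [integral_map measurable_fst.aemeasurable f.continuous.aestronglyMeasurable]
    simpa using hγ f.toContinuousMap 0 0
  · refine ext_of_forall_integral_eq_of_IsFiniteMeasure fun f ↦ ?_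
    rw [integral_map measurable_snd.aemeasurable f.continuous.aestronglyMeasurable]
    simpa using hγ 0 f.toContinuousMap 0

end Duality

lemma exists_lipschitzWith_one_between {X : Type*} [PseudoMetricSpace X] {f g : X → ℝ}
    (h : ∀ x y, f x ≤ g y + dist x y) :
    ∃ u : X → ℝ, LipschitzWith 1 u ∧ f ≤ u ∧ u ≤ g := by
  rcases isEmpty_or_nonempty X with _ | _
  · exact ⟨f, .of_le_add isEmptyElim, le_rfl, isEmptyElim⟩
  have hbdd (x : X) : BddBelow (range fun y ↦ g y + dist x y) := ⟨f x, forall_mem_range.2 (h x)⟩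
  refine ⟨fun x ↦ ⨅ y, g y + dist x y, .of_le_add fun x z ↦ ?_, fun x ↦ le_ciInf (h x), fun x ↦ ?_⟩
  · rw [← sub_le_iff_le_add]
    refine le_ciInf fun y ↦ ?_
    linarith [ciInf_le (hbdd x) y, dist_triangle x z y]
  · simpa using ciInf_le (hbdd x) x

lemma exists_isCoupling_integral_dist_eq {X : Type*} [MetricSpace X] [CompactSpace X]
    [MeasurableSpace X] [BorelSpace X] {μ ν : Measure X} [IsProbabilityMeasure μ]
    [IsProbabilityMeasure ν] {v : X → ℝ} (hv : LipschitzWith 1 v)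
    (hmax : ∀ u : X → ℝ, LipschitzWith 1 u →
      ∫ x, u x ∂μ - ∫ x, u x ∂ν ≤ ∫ x, v x ∂μ - ∫ x, v x ∂ν) :
    ∃ γ : Measure (X × X), IsCoupling γ μ ν ∧
      ∫ p, dist p.1 p.2 ∂γ = ∫ x, v x ∂μ - ∫ x, v x ∂ν := by
  have hint (ρ : Measure X) [IsFiniteMeasure ρ] (f : C(X, ℝ)) : Integrable f ρ :=
    integrable_of_compactSpace ρ f.continuous
  refine exists_isCoupling_integral_eq (c := ⟨fun p ↦ dist p.1 p.2, continuous_dist⟩)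
    (fun φ ψ h ↦ ?_) fun φ ψ h ↦ ?_
  · obtain ⟨u, hu, hφu, huψ⟩ := exists_lipschitzWith_one_between (f := φ) (g := -ψ)
      fun x y ↦ by simpa [← sub_eq_neg_add, le_sub_iff_add_le] using h x y
    have hμ := integral_mono (hint μ φ) (hint μ ⟨u, hu.continuous⟩) hφu
    have hν := integral_mono (hint ν ⟨u, hu.continuous⟩) (hint ν ψ).neg huψ
    simp only [Pi.neg_apply, integral_neg, ContinuousMap.coe_mk] at hμ hν
    linarith [hmax u hu]
  · let w : C(X, ℝ) := ⟨v, hv.continuous⟩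
    have hnonneg := integral_add_integral_nonneg (hint μ (φ - w)) (hint ν (ψ + w)) fun x y ↦ by
      have hdist : dist x y ≤ φ x + ψ y := h x y
      have hlip : v x - v y ≤ dist x y :=
        sub_le_iff_le_add'.2 (by simpa using hv.le_add_mul x y)
      change 0 ≤ φ x - v x + (ψ y + v y)
      linarith
    have hsub : ∫ x, (φ - w) x ∂μ = ∫ x, φ x ∂μ - ∫ x, v x ∂μ :=
      integral_sub (hint μ φ) (hint μ w)
    have hadd : ∫ x, (ψ + w) x ∂ν = ∫ x, ψ x ∂ν + ∫ x, v x ∂ν :=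
      integral_add (hint ν ψ) (hint ν w)
    linarith

lemma map_comap_subtype_val_of_measure_compl_eq_zero {X : Type*} [MeasurableSpace X]
    {μ : Measure X} {s : Set X} (hs : MeasurableSet s) (hμ : μ sᶜ = 0) :
    (μ.comap ((↑) : s → X)).map (↑) = μ := by
  rw [map_comap_subtype_coe hs, Measure.restrict_eq_self_of_ae_mem (mem_ae_iff.2 hμ)]

lemma integral_comap_subtype_val_of_measure_compl_eq_zero {X : Type*} [MeasurableSpace X]
    {μ : Measure X} {s : Set X} (hs : MeasurableSet s) (hμ : μ sᶜ = 0) (f : X → ℝ) :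
    ∫ x : s, f x ∂μ.comap ((↑) : s → X) = ∫ x, f x ∂μ := by
  rw [integral_subtype_comap hs, Measure.restrict_eq_self_of_ae_mem (mem_ae_iff.2 hμ)]

lemma exists_isCoupling_integral_dist_eq_of_isCompact {X : Type*} [MetricSpace X]
    [MeasurableSpace X] [BorelSpace X] {μ ν : Measure X} [IsProbabilityMeasure μ]
    [IsProbabilityMeasure ν] {s : Set X} (hs : IsCompact s) (hμ : μ sᶜ = 0) (hν : ν sᶜ = 0)
    {v : X → ℝ} (hv : LipschitzOnWith 1 v s)
    (hmax : ∀ u : X → ℝ, LipschitzOnWith 1 u s →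
      ∫ x, u x ∂μ - ∫ x, u x ∂ν ≤ ∫ x, v x ∂μ - ∫ x, v x ∂ν) :
    ∃ γ : Measure (X × X), IsCoupling γ μ ν ∧
      ∫ p, dist p.1 p.2 ∂γ = ∫ x, v x ∂μ - ∫ x, v x ∂ν := by
  have := isCompact_iff_compactSpace.1 hs
  have hval := MeasurableEmbedding.subtype_coe hs.measurableSet
  have := hval.isProbabilityMeasure_comap (μ := μ) (by simpa using mem_ae_iff.2 hμ)
  have := hval.isProbabilityMeasure_comap (μ := ν) (by simpa using mem_ae_iff.2 hν)
  have hintegral (f : X → ℝ) : ∫ x : s, f x ∂μ.comap (↑) - ∫ x : s, f x ∂ν.comap (↑) =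
      ∫ x, f x ∂μ - ∫ x, f x ∂ν := by
    rw [integral_comap_subtype_val_of_measure_compl_eq_zero hs.measurableSet hμ,
      integral_comap_subtype_val_of_measure_compl_eq_zero hs.measurableSet hν]
  obtain ⟨γ, hγ, hcost⟩ := exists_isCoupling_integral_dist_eq (μ := μ.comap ((↑) : s → X))
    (ν := ν.comap ((↑) : s → X)) (lipschitzOnWith_iff_restrict.1 hv) fun w hw ↦ by
      let u : X → ℝ := Function.extend (↑) w 0
      have hu (x : s) : u x = w x := Subtype.val_injective.extend_apply w 0 x
      have hlip : LipschitzOnWith 1 u s :=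
        lipschitzOnWith_iff_restrict.2 (by rwa [domRestrict_eq, Function.comp_def, funext hu])
      simpa only [← hintegral, hu, domRestrict_apply] using hmax u hlip
  refine ⟨γ.map (Prod.map (↑) (↑)), ?_, ?_⟩
  · rw [← map_comap_subtype_val_of_measure_compl_eq_zero hs.measurableSet hμ,
      ← map_comap_subtype_val_of_measure_compl_eq_zero hs.measurableSet hν]
    exact hγ.map_prodMap hval.measurable hval.measurable
  · rw [(hval.prodMap hval).integral_map]
    exact hcost.trans (hintegral v)

/-! ### Transport rays -/

lemma sub_le_norm_sub_of_lipschitzWith_one {E : Type*} [SeminormedAddCommGroup E] {v : E → ℝ}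
    (hv : LipschitzWith 1 v) (x y : E) : v x - v y ≤ ‖x - y‖ :=
  sub_le_iff_le_add'.2 (by simpa [dist_eq_norm] using hv.le_add_mul x y)

lemma apply_add_smul_of_mem_Icc {E : Type*} [SeminormedAddCommGroup E] [NormedSpace ℝ E]
    {v : E → ℝ} (hv : LipschitzWith 1 v) {y e : E} (he : ‖e‖ = 1) {s t : ℝ}
    (hs : v (y + s • e) = v y + s) (ht : t ∈ Icc 0 s) : v (y + t • e) = v y + t := by
  have hlower := sub_le_norm_sub_of_lipschitzWith_one hv (y + s • e) (y + t • e)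
  have hupper := sub_le_norm_sub_of_lipschitzWith_one hv (y + t • e) y
  rw [add_sub_add_left_eq_sub, ← sub_smul, norm_smul, he, mul_one,
    Real.norm_of_nonneg (sub_nonneg.2 ht.2)] at hlower
  rw [add_sub_cancel_left, norm_smul, he, mul_one, Real.norm_of_nonneg ht.1] at hupper
  linarith

lemma sameRay_of_sub_eq_norm_sub {E : Type*} [NormedAddCommGroup E] [NormedSpace ℝ E]
    [StrictConvexSpace ℝ E] {v : E → ℝ} (hv : LipschitzWith 1 v) {x y z : E}
    (hxy : v x - v y = ‖x - y‖) (hyz : v y - v z = ‖y - z‖) : SameRay ℝ (x - y) (y - z) := by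
  refine sameRay_iff_norm_add.2 (le_antisymm (norm_add_le _ _) ?_)
  rw [sub_add_sub_cancel]
  linarith [sub_le_norm_sub_of_lipschitzWith_one hv x z]

/-- `e` is the direction, oriented by increasing `v`, of a transport ray of `v` that extends by at
least `ε` on both sides of `y`. -/
structure IsRayDirection {E : Type*} [NormedAddCommGroup E] [NormedSpace ℝ E] (v : E → ℝ) (ε : ℝ)
    (y e : E) : Prop where
  norm_eq_one : ‖e‖ = 1
  apply_add : v (y + ε • e) = v y + ε
  apply_sub : v (y - ε • e) = v y - ε

namespace IsRayDirection

variable {E : Type*} [NormedAddCommGroup E]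

section NormedSpace

variable [NormedSpace ℝ E] {v : E → ℝ} {ε : ℝ} {y e : E}

lemma of_sub_eq_norm_sub [StrictConvexSpace ℝ E] (hv : LipschitzWith 1 v) {w z : E} (hε : 0 < ε)
    (hwy : v w - v y = ‖w - y‖) (hyz : v y - v z = ‖y - z‖) (hεw : ε ≤ ‖w - y‖)
    (hεz : ε ≤ ‖y - z‖) : IsRayDirection v ε y (‖y - z‖⁻¹ • (y - z)) := by
  have hw : w ≠ y := sub_ne_zero.1 (norm_pos_iff.1 (hε.trans_le hεw))
  have hz : y ≠ z := sub_ne_zero.1 (norm_pos_iff.1 (hε.trans_le hεz))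
  set e := ‖y - z‖⁻¹ • (y - z) with he
  have he_norm : ‖e‖ = 1 := norm_smul_inv_norm (sub_ne_zero.2 hz)
  have hy_eq : y = z + ‖y - z‖ • e := by
    rw [he, smul_inv_smul₀ (norm_ne_zero_iff.2 (sub_ne_zero.2 hz)), add_sub_cancel]
  have hw_eq : w = y + ‖w - y‖ • e := by
    have hray := (sameRay_iff_inv_norm_smul_eq_of_ne (sub_ne_zero.2 hw) (sub_ne_zero.2 hz)).1
      (sameRay_of_sub_eq_norm_sub hv hwy hyz)
    rw [he, ← hray, smul_inv_smul₀ (norm_ne_zero_iff.2 (sub_ne_zero.2 hw)), add_sub_cancel]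
  refine ⟨he_norm, apply_add_smul_of_mem_Icc hv he_norm (s := ‖w - y‖) ?_ ⟨hε.le, hεw⟩, ?_⟩
  · rw [← hw_eq]
    linarith
  · have hback := apply_add_smul_of_mem_Icc hv he_norm (y := z) (s := ‖y - z‖)
      (t := ‖y - z‖ - ε) (by rw [← hy_eq]; linarith) ⟨sub_nonneg.2 hεz, sub_le_self _ hε.le⟩
    rw [sub_smul, ← add_sub_assoc, ← hy_eq] at hback
    linarith

lemma eq_add_norm_smul [StrictConvexSpace ℝ E] (h : IsRayDirection v ε y e)
    (hv : LipschitzWith 1 v) (hε : 0 < ε) {x : E} (hx : v x - v y = ‖x - y‖) :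
    x = y + ‖x - y‖ • e := by
  have hy : ‖y - (y - ε • e)‖ = ε := by
    rw [sub_sub_cancel, norm_smul, h.norm_eq_one, Real.norm_of_nonneg hε.le, mul_one]
  have hray := sameRay_of_sub_eq_norm_sub hv hx (z := y - ε • e) (by rw [h.apply_sub, hy]; ring)
  rw [sameRay_iff_norm_smul_eq, hy, sub_sub_cancel, smul_comm] at hray
  rw [smul_right_injective E hε.ne' hray, add_sub_cancel]

end NormedSpace

/- Compare the upper end of each ray with the lower end of the other: the two distances are at least
`2 * ε` on average, and the parallelogram law turns this into a bound on the difference of the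
directions. -/
lemma norm_sub_le_div [InnerProductSpace ℝ E] {v : E → ℝ} {ε : ℝ} {y y' e e' : E}
    (h : IsRayDirection v ε y e) (h' : IsRayDirection v ε y' e') (hv : LipschitzWith 1 v)
    (hε : 0 < ε) : ‖e - e'‖ ≤ ‖y - y'‖ / ε := by
  have hp := sub_le_norm_sub_of_lipschitzWith_one hv (y + ε • e) (y' - ε • e')
  have hq := sub_le_norm_sub_of_lipschitzWith_one hv (y' + ε • e') (y - ε • e)
  rw [h.apply_add, h'.apply_sub,
    show y + ε • e - (y' - ε • e') = ε • (e + e') + (y - y') by module] at hp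
  rw [h'.apply_add, h.apply_sub,
    show y' + ε • e' - (y - ε • e) = ε • (e + e') - (y - y') by module] at hq
  have hpq := parallelogram_law_with_norm ℝ (ε • (e + e')) (y - y')
  have hee' := parallelogram_law_with_norm ℝ e e'
  rw [norm_smul, Real.norm_of_nonneg hε.le] at hpq
  rw [h.norm_eq_one, h'.norm_eq_one] at hee'
  set p := ‖ε • (e + e') + (y - y')‖
  set q := ‖ε • (e + e') - (y - y')‖
  have hsq : 8 * ε ^ 2 ≤ p * p + q * q := by
    have hsum : 4 * ε ≤ p + q := by linarith
    nlinarith [sq_nonneg (p - q), mul_self_le_mul_self (by positivity) hsum]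
  rw [le_div_iff₀ hε]
  refine le_of_sq_le_sq ?_ (norm_nonneg _)
  calc (‖e - e'‖ * ε) ^ 2 = 4 * ε ^ 2 - ε * ‖e + e'‖ * (ε * ‖e + e'‖) := by
        linear_combination ε ^ 2 * hee'
    _ ≤ ‖y - y'‖ ^ 2 := by linarith

end IsRayDirection

lemma measure_eq_zero_of_dimH_lt_finrank {E : Type*} [NormedAddCommGroup E] [NormedSpace ℝ E]
    [FiniteDimensional ℝ E] [MeasurableSpace E] [BorelSpace E] (μ : Measure E)
    [μ.IsAddHaarMeasure] {s : Set E} (hs : dimH s < Module.finrank ℝ E) : μ s = 0 := by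
  refine measure_zero_of_dimH_lt (d := Module.finrank ℝ E) ?_ (mod_cast hs)
  rw [NNReal.coe_natCast]
  exact Measure.absolutelyContinuous_isAddHaarMeasure μ _

lemma lipschitzOnWith_add_smul {E : Type*} [NormedAddCommGroup E] [NormedSpace ℝ E] {s : Set E}
    {e : E → E} {K : NNReal} (he : LipschitzOnWith K e s) (hnorm : ∀ y ∈ s, ‖e y‖ ≤ 1)
    (R : NNReal) :
    LipschitzOnWith (2 + R * K) (fun p : E × ℝ ↦ p.1 + p.2 • e p.1) (s ×ˢ Icc 0 (R : ℝ)) := by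
  refine .of_dist_le_mul ?_
  rintro ⟨y, t⟩ ⟨hy, ht⟩ ⟨y', t'⟩ ⟨hy', -⟩
  have hyδ : dist y y' ≤ dist (y, t) (y', t') := le_max_left _ _
  have htδ : dist t t' ≤ dist (y, t) (y', t') := le_max_right _ _
  set δ := dist (y, t) (y', t')
  have hfst : ‖y - y'‖ ≤ δ := by rwa [← dist_eq_norm]
  have hsnd : ‖(t - t') • e y'‖ ≤ δ := by
    rw [norm_smul, ← dist_eq_norm]
    exact (mul_le_of_le_one_right dist_nonneg (hnorm y' hy')).trans htδ
  have hdir : ‖t • (e y - e y')‖ ≤ R * (K * δ) := by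
    rw [norm_smul, Real.norm_of_nonneg ht.1, ← dist_eq_norm]
    gcongr
    · exact ht.2
    exact (he.dist_le_mul y hy y' hy').trans (by gcongr)
  calc dist (y + t • e y) (y' + t' • e y')
      = ‖(y - y') + (t - t') • e y' + t • (e y - e y')‖ := by
        rw [dist_eq_norm, sub_smul, smul_sub]; congr 1; abel
    _ ≤ ‖y - y'‖ + ‖(t - t') • e y'‖ + ‖t • (e y - e y')‖ := norm_add₃_le
    _ ≤ δ + δ + R * (K * δ) := by gcongr
    _ = (2 + R * K : NNReal) * δ := by push_cast; ring

/-- The points lying inside a transport ray of `v`, at distance at least `ε` from both its ends. -/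
def rayInterior {E : Type*} [NormedAddCommGroup E] [NormedSpace ℝ E] (v : E → ℝ) (ε : ℝ) : Set E :=
  {y | ∃ e, IsRayDirection v ε y e}

lemma isClosed_rayInterior {E : Type*} [NormedAddCommGroup E] [NormedSpace ℝ E] [ProperSpace E]
    {v : E → ℝ} (hv : Continuous v) (ε : ℝ) : IsClosed (rayInterior v ε) := by
  have hclosed : IsClosed {p : E × Metric.sphere (0 : E) 1 |
      v (p.1 + ε • p.2.1) = v p.1 + ε ∧ v (p.1 - ε • p.2.1) = v p.1 - ε} :=
    (isClosed_eq (by fun_prop) (by fun_prop)).inter (isClosed_eq (by fun_prop) (by fun_prop))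
  convert isClosedMap_fst_of_compactSpace _ hclosed
  ext y
  constructor
  · rintro ⟨e, he⟩
    exact ⟨(y, ⟨e, mem_sphere_zero_iff_norm.2 he.norm_eq_one⟩), ⟨he.apply_add, he.apply_sub⟩, rfl⟩
  · rintro ⟨⟨_, e⟩, ⟨hadd, hsub⟩, rfl⟩
    exact ⟨e, mem_sphere_zero_iff_norm.1 e.2, hadd, hsub⟩

lemma dimH_image_add_smul_le {E P : Type*} [NormedAddCommGroup E] [NormedSpace ℝ E]
    [NormedAddCommGroup P] [NormedSpace ℝ P] [FiniteDimensional ℝ P] {ψ : P → E} {Kψ : NNReal}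
    (hψ : LipschitzWith Kψ ψ) {s : Set E} (hs : s ⊆ range ψ) {e : E → E} {Ke : NNReal}
    (he : LipschitzOnWith Ke e s) (hnorm : ∀ y ∈ s, ‖e y‖ ≤ 1) :
    dimH ((fun p : E × ℝ ↦ p.1 + p.2 • e p.1) '' (s ×ˢ Ici 0)) ≤ Module.finrank ℝ P + 1 := by
  have hcover : s ×ˢ Ici (0 : ℝ) = ⋃ n : ℕ, s ×ˢ Icc 0 (n : ℝ) := by
    rw [← prod_iUnion, iUnion_Icc_eq_Ici_self_iff.2 fun x _ ↦ exists_nat_ge x]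
  have hprod : s ×ˢ Ici (0 : ℝ) ⊆ range fun q : P × ℝ ↦ (ψ q.1, q.2) := by
    rintro ⟨y, t⟩ ⟨hy, -⟩
    obtain ⟨p, rfl⟩ := hs hy
    exact ⟨(p, t), rfl⟩
  rw [hcover, image_iUnion, dimH_iUnion]
  refine iSup_le fun n ↦ ?_
  calc dimH ((fun p : E × ℝ ↦ p.1 + p.2 • e p.1) '' (s ×ˢ Icc 0 (n : ℝ)))
      ≤ dimH (s ×ˢ Icc 0 (n : ℝ)) := (lipschitzOnWith_add_smul he hnorm n).dimH_image_le
    _ ≤ dimH (range fun q : P × ℝ ↦ (ψ q.1, q.2)) :=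
        dimH_mono ((prod_mono_right Icc_subset_Ici_self).trans hprod)
    _ ≤ dimH (univ : Set (P × ℝ)) := ((hψ.comp .prod_fst).prodMk .prod_snd).dimH_range_le
    _ = Module.finrank ℝ P + 1 := by
        rw [Real.dimH_univ_eq_finrank, Module.finrank_prod, Module.finrank_self, Nat.cast_add_one]

lemma measure_rays_through_rayInterior_eq_zero {E P : Type*} [NormedAddCommGroup E]
    [InnerProductSpace ℝ E] [FiniteDimensional ℝ E] [MeasurableSpace E] [BorelSpace E]
    [NormedAddCommGroup P] [NormedSpace ℝ P] [FiniteDimensional ℝ P] (μ : Measure E)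
    [μ.IsAddHaarMeasure] (hdim : Module.finrank ℝ P + 1 < Module.finrank ℝ E) {ψ : P → E}
    {K : NNReal} (hψ : LipschitzWith K ψ) {v : E → ℝ} (hv : LipschitzWith 1 v) {ε : ℝ}
    (hε : 0 < ε) :
    μ {x | ∃ y ∈ rayInterior v ε ∩ range ψ, v x - v y = ‖x - y‖} = 0 := by
  choose! e he using fun y (hy : y ∈ rayInterior v ε) ↦ hy
  have he_lip : LipschitzOnWith ε⁻¹.toNNReal e (rayInterior v ε) := by
    refine .of_dist_le_mul fun y hy y' hy' ↦ ?_
    rw [dist_eq_norm, dist_eq_norm, Real.coe_toNNReal _ (inv_pos.2 hε).le, inv_mul_eq_div]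
    exact (he y hy).norm_sub_le_div (he y' hy') hv hε
  have hdimH := dimH_image_add_smul_le hψ inter_subset_right
    (he_lip.mono (inter_subset_left (t := range ψ))) fun y hy ↦ (he y hy.1).norm_eq_one.le
  refine measure_mono_null ?_
    (measure_eq_zero_of_dimH_lt_finrank μ (hdimH.trans_lt (mod_cast hdim)))
  rintro x ⟨y, hy, hx⟩
  exact ⟨(y, ‖x - y‖), ⟨hy, norm_nonneg _⟩, ((he y hy.1).eq_add_norm_smul hv hε hx).symm⟩

lemma measurableSet_range_of_continuous {X Y : Type*} [TopologicalSpace X] [SigmaCompactSpace X]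
    [TopologicalSpace Y] [T2Space Y] [MeasurableSpace Y] [OpensMeasurableSpace Y] {f : X → Y}
    (hf : Continuous f) : MeasurableSet (range f) := by
  rw [← image_univ, ← iUnion_compactCovering, image_iUnion]
  exact .iUnion fun n ↦ ((isCompact_compactCovering X n).image hf).measurableSet

lemma measure_map_rayInterior_inter_range_eq_zero {E P : Type*} [NormedAddCommGroup E]
    [InnerProductSpace ℝ E] [FiniteDimensional ℝ E] [MeasurableSpace E] [BorelSpace E]
    [NormedAddCommGroup P] [NormedSpace ℝ P] [FiniteDimensional ℝ P] {ρ μ : Measure E}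
    [ρ.IsAddHaarMeasure] (hac : μ ≪ ρ) {T : E → E} (hT : Measurable T) {v : E → ℝ}
    (hv : LipschitzWith 1 v) (hray : ∀ᵐ x ∂μ, v x - v (T x) = ‖x - T x‖)
    (hdim : Module.finrank ℝ P + 1 < Module.finrank ℝ E) {ψ : P → E} {K : NNReal}
    (hψ : LipschitzWith K ψ) {ε : ℝ} (hε : 0 < ε) :
    μ.map T (rayInterior v ε ∩ range ψ) = 0 := by
  have := FiniteDimensional.proper_real E
  have := FiniteDimensional.proper_real P
  rw [Measure.map_apply hT ((isClosed_rayInterior hv.continuous ε).measurableSet.inter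
    (measurableSet_range_of_continuous hψ.continuous))]
  have hnull := hac (measure_rays_through_rayInterior_eq_zero ρ hdim hψ hv hε)
  refine measure_mono_null (fun x hx ↦ ?_) (measure_union_null hnull hray)
  by_cases h : v x - v (T x) = ‖x - T x‖
  · exact .inl ⟨T x, hx, h⟩
  · exact .inr h

/-! ### Potentials and optimal maps -/

lemma integrable_of_isCompact {X F : Type*} [TopologicalSpace X] [T2Space X] [MeasurableSpace X]
    [BorelSpace X] [NormedAddCommGroup F] {μ : Measure X} [IsFiniteMeasure μ] {s : Set X}
    (hs : IsCompact s) (hμ : μ sᶜ = 0) {f : X → F} (hf : ContinuousOn f s) : Integrable f μ := by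
  rw [← Measure.restrict_eq_self_of_ae_mem (mem_ae_iff.2 hμ)]
  exact hf.integrableOn_compact hs

section KantorovichPotential

variable {d : ℕ} {Ω : Set (EuclideanSpace ℝ (Fin d))} {μ ν : Measure (EuclideanSpace ℝ (Fin d))}
  {u v : EuclideanSpace ℝ (Fin d) → ℝ}

lemma W1_le_integral_of_isCoupling [IsProbabilityMeasure μ]
    {γ : Measure (EuclideanSpace ℝ (Fin d) × EuclideanSpace ℝ (Fin d))} (hγ : IsCoupling γ μ ν) :
    W1 μ ν ≤ ∫ p, ‖p.1 - p.2‖ ∂γ := by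
  refine csInf_le ⟨0, ?_⟩ ⟨γ, hγ.isProbabilityMeasure, hγ.map_fst, hγ.map_snd, rfl⟩
  rintro _ ⟨γ', -, -, -, rfl⟩
  positivity

lemma IsKantorovichPotential.congr (hu : IsKantorovichPotential Ω μ ν u) (hμΩ : μ Ωᶜ = 0)
    (hνΩ : ν Ωᶜ = 0) (h : EqOn u v Ω) : IsKantorovichPotential Ω μ ν v := by
  have hint (ρ : Measure (EuclideanSpace ℝ (Fin d))) (hρ : ρ Ωᶜ = 0) :
      ∫ x, u x ∂ρ = ∫ x, v x ∂ρ :=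
    integral_congr_ae (mem_ae_iff.2 (measure_mono_null (compl_subset_compl.2 h) hρ))
  exact ⟨fun x hx y hy ↦ h hx ▸ h hy ▸ hu.1 hx hy, hint μ hμΩ ▸ hint ν hνΩ ▸ hu.2⟩

lemma IsKantorovichPotential.W1_le [IsProbabilityMeasure μ] [IsProbabilityMeasure ν]
    (hu : IsKantorovichPotential Ω μ ν u) (hΩ : IsCompact Ω) (hμΩ : μ Ωᶜ = 0) (hνΩ : ν Ωᶜ = 0) :
    W1 μ ν ≤ ∫ x, u x ∂μ - ∫ x, u x ∂ν := by
  obtain ⟨γ, hγ, hcost⟩ := exists_isCoupling_integral_dist_eq_of_isCompact hΩ hμΩ hνΩ hu.1 hu.2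
  simpa only [← hcost, dist_eq_norm] using W1_le_integral_of_isCoupling hγ

lemma IsOptimalMap.ae_sub_eq_norm_sub [IsProbabilityMeasure μ] [IsProbabilityMeasure ν]
    {T : EuclideanSpace ℝ (Fin d) → EuclideanSpace ℝ (Fin d)} (hT : IsOptimalMap Ω μ ν T)
    (hΩ : IsCompact Ω) (hμΩ : μ Ωᶜ = 0) (hνΩ : ν Ωᶜ = 0) (hv : LipschitzWith 1 v)
    (hpot : IsKantorovichPotential Ω μ ν v) : ∀ᵐ x ∂μ, v x - v (T x) = ‖x - T x‖ := by
  obtain ⟨hTmeas, -, hTmap, hTcost⟩ := hT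
  have hvν : Integrable v (μ.map T) :=
    hTmap ▸ integrable_of_isCompact hΩ hνΩ hv.continuous.continuousOn
  have hvT : Integrable (fun x ↦ v (T x)) μ := hvν.comp_measurable hTmeas
  have hvμ : Integrable v μ := integrable_of_isCompact hΩ hμΩ hv.continuous.continuousOn
  have hdist : Integrable (fun x ↦ ‖x - T x‖) μ := by
    have hid : Integrable id μ := integrable_of_isCompact hΩ hμΩ continuousOn_id
    have hid' : Integrable id (μ.map T) :=
      hTmap ▸ integrable_of_isCompact hΩ hνΩ continuousOn_id
    exact (hid.sub (hid'.comp_measurable hTmeas)).norm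
  have hdiff : Integrable (fun x ↦ v x - v (T x)) μ := hvμ.sub hvT
  have hslack_nonneg : 0 ≤ fun x ↦ ‖x - T x‖ - (v x - v (T x)) := fun x ↦
    sub_nonneg.2 (sub_le_norm_sub_of_lipschitzWith_one hv x (T x))
  have hslack_integral : ∫ x, (‖x - T x‖ - (v x - v (T x))) ∂μ ≤ 0 := by
    rw [integral_sub hdist hdiff, integral_sub hvμ hvT, hTcost,
      ← integral_map hTmeas.aemeasurable hvν.aestronglyMeasurable, hTmap]
    exact sub_nonpos.2 (hpot.W1_le hΩ hμΩ hνΩ)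
  have hslack := (integral_eq_zero_iff_of_nonneg hslack_nonneg (hdist.sub hdiff)).1
    (hslack_integral.antisymm (integral_nonneg hslack_nonneg))
  filter_upwards [hslack] with x hx using (sub_eq_zero.1 hx).symm

end KantorovichPotential

section RayLength

variable {d : ℕ} {Ω : Set (EuclideanSpace ℝ (Fin d))} {u v : EuclideanSpace ℝ (Fin d) → ℝ}
  {y : EuclideanSpace ℝ (Fin d)}

lemma exists_of_rayLow_pos (h : 0 < rayLow Ω u y) : ∃ z ∈ Ω, u y - u z = ‖y - z‖ ∧ 0 < ‖y - z‖ := by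
  by_contra! hle
  refine h.not_ge (Real.sSup_nonpos ?_)
  rintro _ ⟨z, hz, heq, rfl⟩
  exact hle z hz heq

lemma exists_of_rayHigh_pos (h : 0 < rayHigh Ω u y) :
    ∃ w ∈ Ω, u w - u y = ‖w - y‖ ∧ 0 < ‖w - y‖ := by
  by_contra! hle
  refine h.not_ge (Real.sSup_nonpos ?_)
  rintro _ ⟨w, hw, heq, rfl⟩
  rw [norm_sub_rev] at heq ⊢
  exact hle w hw heq

lemma exists_mem_rayInterior_of_rayLow_pos_of_rayHigh_pos (hv : LipschitzWith 1 v)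
    (huv : EqOn u v Ω) (hy : y ∈ Ω) (hlow : 0 < rayLow Ω u y) (hhigh : 0 < rayHigh Ω u y) :
    ∃ n : ℕ, y ∈ rayInterior v (1 / (n + 1)) := by
  obtain ⟨z, hz, hyz, hz_pos⟩ := exists_of_rayLow_pos hlow
  obtain ⟨w, hw, hwy, hw_pos⟩ := exists_of_rayHigh_pos hhigh
  rw [huv hy, huv hz] at hyz
  rw [huv hw, huv hy] at hwy
  obtain ⟨n, hn⟩ := exists_nat_one_div_lt (lt_min hw_pos hz_pos)
  obtain ⟨hnw, hnz⟩ := lt_min_iff.1 hn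
  exact ⟨n, _, .of_sub_eq_norm_sub hv Nat.one_div_pos_of_nat hwy hyz hnw.le hnz.le⟩

end RayLength

/-- Countable `m`-rectifiability, in the strict form without an exceptional null set: `M` is covered
by countably many Lipschitz images of `ℝ^m`. -/
def IsCountablyRectifiable {E : Type*} [NormedAddCommGroup E] (m : ℕ) (M : Set E) : Prop :=
  ∃ ψ : ℕ → EuclideanSpace ℝ (Fin m) → E, (∀ i, ∃ K, LipschitzWith K (ψ i)) ∧ M ⊆ ⋃ i, range (ψ i)

lemma IsC1Submanifold.isCountablyRectifiable {d m : ℕ} {M : Set (EuclideanSpace ℝ (Fin d))}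
    (hM : IsC1Submanifold m M) : IsCountablyRectifiable m M := by
  obtain ⟨U, φ, hMU, hU⟩ := hM
  have hψ (i : ℕ) : ∃ ψ : EuclideanSpace ℝ (Fin m) → EuclideanSpace ℝ (Fin d),
      (∃ K, LipschitzWith K ψ) ∧ U i ⊆ range ψ := by
    obtain ⟨-, -, -, K, χ, hχ, hinv⟩ := hU i
    obtain ⟨ψ, hψ, heq⟩ := hχ.extend_finite_dimension
    exact ⟨ψ, ⟨_, hψ⟩, fun x hx ↦ ⟨φ i x, (heq (mem_image_of_mem _ hx)).symm.trans (hinv x hx)⟩⟩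
  choose ψ hψLip hUψ using hψ
  exact ⟨ψ, hψLip, hMU.trans (iUnion_mono hUψ)⟩

theorem stmt9_general {d : ℕ} {Ω : Set (EuclideanSpace ℝ (Fin d))} (hΩ : IsCompact Ω)
    {μ ν : Measure (EuclideanSpace ℝ (Fin d))} [IsProbabilityMeasure μ] [IsProbabilityMeasure ν]
    (hμΩ : μ Ωᶜ = 0) (hνΩ : ν Ωᶜ = 0) (hac : μ ≪ volume) {m : ℕ} (hm : m + 2 ≤ d)
    {M : Set (EuclideanSpace ℝ (Fin d))} (hM : IsCountablyRectifiable m M)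
    {u0 : EuclideanSpace ℝ (Fin d) → ℝ} (hu0 : IsKantorovichPotential Ω μ ν u0)
    {T0 : EuclideanSpace ℝ (Fin d) → EuclideanSpace ℝ (Fin d)} (hT0 : IsOptimalMap Ω μ ν T0) :
    ν {y | y ∈ M ∧ 0 < rayLow Ω u0 y ∧ 0 < rayHigh Ω u0 y} = 0 := by
  obtain ⟨v, hv, huv⟩ := hu0.1.extend_real
  obtain ⟨ψ, hψ, hMψ⟩ := hM
  have hray := hT0.ae_sub_eq_norm_sub hΩ hμΩ hνΩ hv (hu0.congr hμΩ hνΩ huv)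
  have hnull (n i : ℕ) : ν (rayInterior v (1 / (n + 1)) ∩ range (ψ i)) = 0 := by
    obtain ⟨K, hK⟩ := hψ i
    rw [← hT0.2.2.1]
    exact measure_map_rayInterior_inter_range_eq_zero hac hT0.1 hv hray
      (by simpa using Nat.lt_of_succ_le hm) hK Nat.one_div_pos_of_nat
  refine measure_mono_null (fun y hy ↦ ?_) (measure_union_null hνΩ
    (measure_iUnion_null fun n ↦ measure_iUnion_null (hnull n)))
  obtain ⟨hyM, hlow, hhigh⟩ := hy
  rw [mem_union, or_iff_not_imp_left, notMem_compl_iff]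
  intro hyΩ
  obtain ⟨n, hn⟩ := exists_mem_rayInterior_of_rayLow_pos_of_rayHigh_pos hv huv hyΩ hlow hhigh
  obtain ⟨i, hi⟩ := mem_iUnion.1 (hMψ hyM)
  exact mem_iUnion₂.2 ⟨n, i, hn, hi⟩

theorem stmt9 {d : ℕ} (hd : 1 ≤ d) (Ω : Set (EuclideanSpace ℝ (Fin d)))
    (hΩc : IsCompact Ω) (hΩv : Convex ℝ Ω)
    (μ ν : Measure (EuclideanSpace ℝ (Fin d)))
    [IsProbabilityMeasure μ] [IsProbabilityMeasure ν]
    (hμΩ : μ Ωᶜ = 0) (hνΩ : ν Ωᶜ = 0) (hac : μ ≪ volume)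
    (m : ℕ) (hm : m + 2 ≤ d) (M : Set (EuclideanSpace ℝ (Fin d)))
    (hM : IsC1Submanifold m M) (hspt : mSupport ν ⊆ M)
    (u0 : EuclideanSpace ℝ (Fin d) → ℝ) (hu0 : IsKantorovichPotential Ω μ ν u0)
    (T0 : EuclideanSpace ℝ (Fin d) → EuclideanSpace ℝ (Fin d))
    (hT0 : IsOptimalMap Ω μ ν T0) :
    ν {y | y ∈ mSupport ν ∧ 0 < rayLow Ω u0 y ∧ 0 < rayHigh Ω u0 y} = 0 := by
  refine measure_mono_null ?_
    (stmt9_general hΩc hμΩ hνΩ hac hm hM.isCountablyRectifiable hu0 hT0)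
  exact fun y hy ↦ ⟨hspt hy.1, hy.2⟩
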